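/- arXiv:1004.0613 — 2 statements merged into one kernel-verified Lean document; each statement's English description precedes it below -/
import Mathlib

section
/- Let Q be any quiver whose underlying graph is the extended Dynkin diagram Ẽ_6: vertex set {1,2,…,7} with edges {1,2}, {2,7}, {3,4}, {4,7}, {5,6}, {6,7}. Then for every vertex i of Q the frieze sequence (X^i_j)_{j≥0} satisfies a linear recurrence over the field ℚ(x_1,…,x_7). -/
/-- The (ordered) edge description of the extended Dynkin diagram Ẽ_6 on vertices
`{1,…,7}` : edges `{1,2}, {2,7}, {3,4}, {4,7}, {5,6}, {6,7}`; the vertex labelled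
`k ∈ {1,…,7}` corresponds to the index `k−1` of `Fin 7`. -/
def e6Edge (a b : ℕ) : Prop :=
  (a = 0 ∧ b = 1) ∨ (a = 1 ∧ b = 6) ∨ (a = 2 ∧ b = 3) ∨ (a = 3 ∧ b = 6) ∨
  (a = 4 ∧ b = 5) ∨ (a = 5 ∧ b = 6)

/-- The shift operator on sequences, as an algebra endomorphism. -/
def seqShift (F : Type*) [Field F] : (ℕ → F) →ₐ[F] (ℕ → F) where
  toFun u n := u (n + 1)
  map_one' := rfl
  map_mul' _ _ := rfl
  map_zero' := rfl
  map_add' _ _ := rfl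
  commutes' _ := rfl

/-- A sequence is linearly recurrent if it lies in a finite-dimensional shift-invariant space of
sequences. -/
def IsLinRec {F : Type*} [Field F] (u : ℕ → F) : Prop :=
  ∃ W : Submodule F (ℕ → F), W.FG ∧ W.map (seqShift F).toLinearMap ≤ W ∧ u ∈ W

namespace IsLinRec

variable {F : Type*} [Field F] {u v : ℕ → F}

theorem one : IsLinRec (1 : ℕ → F) := by
  refine ⟨1, ?_, ?_, Submodule.one_le.mp le_rfl⟩
  · rw [Submodule.one_eq_span]
    exact Submodule.fg_span_singleton _
  · rw [Submodule.map_one]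

theorem add (hu : IsLinRec u) (hv : IsLinRec v) : IsLinRec (u + v) := by
  obtain ⟨W, hW, hWs, huW⟩ := hu
  obtain ⟨W', hW', hWs', hvW⟩ := hv
  refine ⟨W ⊔ W', hW.sup hW', ?_, Submodule.add_mem_sup huW hvW⟩
  rw [Submodule.map_sup]
  exact sup_le_sup hWs hWs'

theorem neg (hu : IsLinRec u) : IsLinRec (-u) := by
  obtain ⟨W, hW, hWs, huW⟩ := hu
  exact ⟨W, hW, hWs, W.neg_mem huW⟩

theorem sub (hu : IsLinRec u) (hv : IsLinRec v) : IsLinRec (u - v) := by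
  rw [sub_eq_add_neg]
  exact hu.add hv.neg

theorem mul (hu : IsLinRec u) (hv : IsLinRec v) : IsLinRec (u * v) := by
  obtain ⟨W, hW, hWs, huW⟩ := hu
  obtain ⟨W', hW', hWs', hvW⟩ := hv
  refine ⟨W * W', hW.mul hW', ?_, Submodule.mul_mem_mul huW hvW⟩
  rw [Submodule.map_mul]
  exact mul_le_mul' hWs hWs'

theorem shift (hu : IsLinRec u) : IsLinRec (fun n => u (n + 1)) := by
  obtain ⟨W, hW, hWs, huW⟩ := hu
  exact ⟨W, hW, hWs, hWs ⟨u, huW, rfl⟩⟩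

theorem of_shift (hu : IsLinRec (fun n => u (n + 1))) : IsLinRec u := by
  obtain ⟨W, hW, hWs, huW⟩ := hu
  refine ⟨W ⊔ Submodule.span F {u}, hW.sup (Submodule.fg_span_singleton _), ?_,
    Submodule.mem_sup_right (Submodule.mem_span_singleton_self u)⟩
  rw [Submodule.map_sup, Submodule.map_span, Set.image_singleton]
  refine le_sup_of_le_left (sup_le hWs ?_)
  rw [Submodule.span_singleton_le_iff_mem]
  exact huW

theorem of_shift_iterate (k : ℕ) (hu : IsLinRec (fun n => u (n + k))) : IsLinRec u := by
  induction k with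
  | zero => exact hu
  | succ k ih =>
    refine ih (of_shift ?_)
    convert hu using 2
    congr 1
    omega

theorem of_recurrence (s : ℕ) (c : Fin s → F)
    (h : ∀ n, u (n + s) = ∑ t : Fin s, c t * u (n + t)) : IsLinRec u := by
  rcases Nat.eq_zero_or_pos s with rfl | hs
  · have : u = 0 := by
      ext n
      simpa using h n
    refine ⟨⊥, Submodule.fg_bot, by simp, by simp [this]⟩
  refine ⟨Submodule.span F (Set.range fun (t : Fin s) (n : ℕ) => u (n + t)),
    Submodule.fg_span (Set.finite_range _), ?_, Submodule.subset_span ⟨⟨0, hs⟩, rfl⟩⟩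
  rw [Submodule.map_span, Submodule.span_le]
  rintro _ ⟨_, ⟨t, rfl⟩, rfl⟩
  rcases Nat.lt_or_ge (t + 1) s with ht | ht
  · refine Submodule.subset_span ⟨⟨t + 1, ht⟩, ?_⟩
    ext n
    change u (n + (t + 1)) = u (n + 1 + t)
    congr 1
    omega
  · have : (seqShift F).toLinearMap (fun n => u (n + t)) =
        ∑ t : Fin s, c t • fun n : ℕ => u (n + t) := by
      ext n
      have hn : n + 1 + t.val = n + s := by omega
      simp only [Finset.sum_apply, Pi.smul_apply, smul_eq_mul]
      rw [← h n, ← hn]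
      rfl
    rw [this]
    exact Submodule.sum_mem _ fun i _ =>
      Submodule.smul_mem _ _ (Submodule.subset_span ⟨i, rfl⟩)

theorem seqShift_pow_apply (k : ℕ) (u : ℕ → F) (n : ℕ) :
    ((seqShift F).toLinearMap ^ k) u n = u (n + k) := by
  induction k generalizing u with
  | zero => rfl
  | succ k ih =>
    rw [pow_succ, Module.End.mul_apply, ih]
    rfl

theorem exists_recurrence (hu : IsLinRec u) :
    ∃ s : ℕ, 1 ≤ s ∧ ∃ c : Fin s → F, ∀ n, u (n + s) = ∑ t : Fin s, c t * u (n + t.val) := by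
  obtain ⟨W, hW, hWs, huW⟩ := hu
  have : Module.Finite F W := Module.Finite.iff_fg.mpr hW
  have hmap : ∀ w ∈ W, (seqShift F).toLinearMap w ∈ W := fun w hw => hWs ⟨w, hw, rfl⟩
  let g : Module.End F W := (seqShift F).toLinearMap.restrict hmap
  let p : Polynomial F := g.charpoly * Polynomial.X
  have hp : p.Monic := g.charpoly_monic.mul Polynomial.monic_X
  have hpg : Polynomial.aeval g p = 0 := by
    rw [map_mul, LinearMap.aeval_self_charpoly, zero_mul]
  have hdeg : p.natDegree = g.charpoly.natDegree + 1 :=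
    Polynomial.natDegree_mul_X g.charpoly_monic.ne_zero
  refine ⟨p.natDegree, by omega, fun t => -p.coeff t, fun n => ?_⟩
  have hpow : ∀ k : ℕ, ((g ^ k) ⟨u, huW⟩ : ℕ → F) n = u (n + k) := by
    intro k
    rw [← seqShift_pow_apply k u n, Module.End.pow_restrict k hmap]
    rfl
  have key := congrArg (fun f : Module.End F W => (f ⟨u, huW⟩ : ℕ → F) n) hpg
  rw [Polynomial.aeval_eq_sum_range, Finset.sum_range_succ, hp.coeff_natDegree, one_smul] at key
  simp only [LinearMap.add_apply, LinearMap.sum_apply, LinearMap.smul_apply, Submodule.coe_add,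
    Submodule.coe_sum, Submodule.coe_smul, Pi.add_apply, Finset.sum_apply, Pi.smul_apply,
    smul_eq_mul, hpow, LinearMap.zero_apply, Submodule.coe_zero, Pi.zero_apply] at key
  rw [Fin.sum_univ_eq_sum_range (fun t => -p.coeff t * u (n + t))]
  simp only [neg_mul, Finset.sum_neg_distrib]
  linear_combination key

end IsLinRec

section Arms

variable {F : Type*} [Field F]

/-- The relation between the central sequence `c` and the sequences `b` (inner vertex) and
`a` (outer vertex) of an arm of `Ẽ_6` oriented away from the center. -/
structure IsOutwardArm (c a b : ℕ → F) : Prop where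
  outer : ∀ n, a (n + 1) * a n = 1 + b (n + 1)
  inner : ∀ n, b (n + 1) * b n = 1 + c (n + 1) * a n
  outer_ne : ∀ n, a n ≠ 0
  inner_ne : ∀ n, b n ≠ 0

namespace IsOutwardArm

variable {c a b : ℕ → F}

theorem inner_eq (h : IsOutwardArm c a b) (n : ℕ) : b (n + 1) = a n * a (n + 1) - 1 := by
  linear_combination -h.outer n

theorem center_eq (h : IsOutwardArm c a b) (n : ℕ) :
    c (n + 2) = a n * a (n + 1) * a (n + 2) - a n - a (n + 2) := by
  have h1 := h.inner (n + 1)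
  rw [h.inner_eq (n + 1), h.inner_eq n] at h1
  refine mul_right_cancel₀ (h.outer_ne (n + 1)) ?_
  linear_combination -h1

end IsOutwardArm

variable {c a₀ b₀ a₁ b₁ a₂ b₂ : ℕ → F}

/-- The quotient `(a₀ (n + 4) + a₁ n) / a₂ (n + 2)` is unchanged when `n` is increased by one and
the arms are permuted cyclically. -/
theorem IsOutwardArm.cyclic_invariance (h₀ : IsOutwardArm c a₀ b₀) (h₁ : IsOutwardArm c a₁ b₁)
    (h₂ : IsOutwardArm c a₂ b₂) (hc : ∀ n, c (n + 1) * c n = 1 + b₀ n * b₁ n * b₂ n)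
    (hc0 : ∀ n, c n ≠ 0) (n : ℕ) :
    (a₀ (n + 4) + a₁ n) * a₀ (n + 3) = (a₁ (n + 5) + a₂ (n + 1)) * a₂ (n + 2) := by
  have hfwd : a₁ (n + 5) * c (n + 4) = b₁ (n + 3) + b₀ (n + 4) * b₂ (n + 4) := by
    refine mul_right_cancel₀ (h₁.inner_ne (n + 4)) ?_
    linear_combination hc (n + 4) - c (n + 4) * h₁.center_eq (n + 3) - h₁.inner (n + 3)
      + a₁ (n + 5) * c (n + 4) * h₁.inner_eq (n + 3)
  have hbwd : a₁ n * c (n + 3) = b₁ (n + 3) + b₀ (n + 2) * b₂ (n + 2) := by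
    refine mul_right_cancel₀ (h₁.inner_ne (n + 2)) ?_
    linear_combination hc (n + 2) - c (n + 3) * h₁.center_eq n - h₁.inner (n + 2)
      + a₁ n * c (n + 3) * h₁.inner_eq (n + 1)
  have hmid : c (n + 3) * (b₁ (n + 3) * a₂ (n + 2) + b₀ (n + 4) * a₂ (n + 4)) =
      c (n + 4) * (b₁ (n + 3) * a₀ (n + 3) + b₂ (n + 2) * a₀ (n + 1)) := by
    have e₁ : b₀ (n + 4) * b₀ (n + 3) = 1 + c (n + 4) * a₀ (n + 3) := h₀.inner (n + 3)
    have e₂ : b₂ (n + 3) * b₂ (n + 2) = 1 + c (n + 3) * a₂ (n + 2) := h₂.inner (n + 2)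
    have e₃ : a₂ (n + 4) * b₂ (n + 3) = c (n + 4) + a₂ (n + 2) := by
      linear_combination a₂ (n + 4) * h₂.inner_eq (n + 2) - h₂.center_eq (n + 2)
    have e₄ : a₀ (n + 1) * b₀ (n + 3) = c (n + 3) + a₀ (n + 3) := by
      linear_combination a₀ (n + 1) * h₀.inner_eq (n + 2) - h₀.center_eq (n + 1)
    refine mul_right_cancel₀ (mul_ne_zero (h₀.inner_ne (n + 3)) (h₂.inner_ne (n + 3))) ?_
    linear_combination c (n + 3) * a₂ (n + 4) * b₂ (n + 3) * e₁
      + c (n + 3) * (1 + c (n + 4) * a₀ (n + 3)) * e₃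
      - c (n + 4) * a₀ (n + 1) * b₀ (n + 3) * e₂
      - c (n + 4) * (1 + c (n + 3) * a₂ (n + 2)) * e₄
      - (c (n + 3) * a₂ (n + 2) - c (n + 4) * a₀ (n + 3)) * hc (n + 3)
  have e₅ : c (n + 4) = a₂ (n + 2) * b₂ (n + 4) - a₂ (n + 4) := by
    linear_combination h₂.center_eq (n + 2) - a₂ (n + 2) * h₂.inner_eq (n + 3)
  have e₆ : c (n + 3) = b₀ (n + 2) * a₀ (n + 3) - a₀ (n + 1) := by
    linear_combination h₀.center_eq (n + 1) - a₀ (n + 3) * h₀.inner_eq (n + 1)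
  refine mul_right_cancel₀ (mul_ne_zero (hc0 (n + 3)) (hc0 (n + 4))) ?_
  linear_combination (-1 : F) * hmid + c (n + 4) * a₀ (n + 3) * hbwd
    - c (n + 3) * a₂ (n + 2) * hfwd - c (n + 3) * c (n + 4) * h₀.inner_eq (n + 3)
    + c (n + 3) * c (n + 4) * h₂.inner_eq (n + 1)
    + c (n + 3) * b₀ (n + 4) * e₅ - c (n + 4) * b₂ (n + 2) * e₆

/-- The outer sequence of an arm satisfies a linear recurrence of order twelve. -/
theorem IsOutwardArm.exists_outer_recurrence (h₀ : IsOutwardArm c a₀ b₀)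
    (h₁ : IsOutwardArm c a₁ b₁) (h₂ : IsOutwardArm c a₂ b₂)
    (hc : ∀ n, c (n + 1) * c n = 1 + b₀ n * b₁ n * b₂ n) (hc0 : ∀ n, c n ≠ 0) :
    ∃ K : F, ∀ n, a₀ (n + 14) = K * a₀ (n + 8) - a₀ (n + 2) := by
  let α : ℕ → F := fun n => (a₀ (n + 4) + a₁ n) / a₂ (n + 2)
  have hα₀ : ∀ n, a₀ (n + 4) + a₁ n = α n * a₂ (n + 2) := fun n =>
    (div_mul_cancel₀ _ (h₂.outer_ne _)).symm
  have hα₁ : ∀ n, a₁ (n + 5) + a₂ (n + 1) = α n * a₀ (n + 3) := fun n => by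
    refine mul_right_cancel₀ (h₂.outer_ne (n + 2)) ?_
    linear_combination a₀ (n + 3) * hα₀ n - h₀.cyclic_invariance h₁ h₂ hc hc0 n
  have hα₂ : ∀ n, a₂ (n + 6) + a₀ (n + 2) = α n * a₁ (n + 4) := fun n => by
    have h := h₁.cyclic_invariance h₂ h₀ (fun n => by rw [hc n]; ring) hc0 (n + 1)
    refine mul_right_cancel₀ (h₀.outer_ne (n + 3)) ?_
    linear_combination a₁ (n + 4) * hα₁ n - h
  have hα : ∀ n, α (n + 3) = α n := fun n => by
    have h := h₂.cyclic_invariance h₀ h₁ (fun n => by rw [hc n]; ring) hc0 (n + 2)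
    refine mul_right_cancel₀ (h₂.outer_ne (n + 5)) ?_
    refine mul_right_cancel₀ (h₁.outer_ne (n + 4)) ?_
    linear_combination a₂ (n + 5) * hα₂ n - a₁ (n + 4) * hα₀ (n + 3) - h
  let T : ℕ → F := fun n => α n * α (n + 1) * α (n + 2) - α n - α (n + 1) - α (n + 2)
  have hT : ∀ n, T n = T 0 := fun n => by
    induction n with
    | zero => rfl
    | succ n ih =>
      rw [← ih]
      simp only [T]
      rw [show n + 1 + 2 = n + 3 from rfl, hα n, show n + 1 + 1 = n + 2 from rfl]
      ring
  refine ⟨T 0, fun n => ?_⟩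
  have g₁ := hα₀ (n + 4)
  have g₂ := hα₁ (n + 5)
  have g₃ := hα₂ (n + 6)
  have g₄ := hα₀ (n + 10)
  rw [hα (n + 1)] at g₁
  rw [hα (n + 2)] at g₂
  rw [hα (n + 3), hα n] at g₃
  rw [hα (n + 7), hα (n + 4), hα (n + 1)] at g₄
  rw [← hT n]
  simp only [T]
  linear_combination g₄ + α (n + 1) * g₃ + (α n * α (n + 1) - 1) * g₂ + α n * g₁ + hα₂ n

theorem IsOutwardArm.isLinRec_outer (h₀ : IsOutwardArm c a₀ b₀)
    (h₁ : IsOutwardArm c a₁ b₁) (h₂ : IsOutwardArm c a₂ b₂)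
    (hc : ∀ n, c (n + 1) * c n = 1 + b₀ n * b₁ n * b₂ n) (hc0 : ∀ n, c n ≠ 0) :
    IsLinRec a₀ := by
  obtain ⟨K, hK⟩ := h₀.exists_outer_recurrence h₁ h₂ hc hc0
  refine .of_shift_iterate 2 (.of_recurrence 12 ![-1, 0, 0, 0, 0, 0, K, 0, 0, 0, 0, 0] fun n => ?_)
  have e : n + 12 + 2 = n + 14 := rfl
  simp [Fin.sum_univ_succ, e, hK n]
  ring

theorem IsOutwardArm.isLinRec_inner {a b : ℕ → F} (h : IsOutwardArm c a b) (ha : IsLinRec a) :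
    IsLinRec b := by
  refine .of_shift ?_
  have : (fun n => b (n + 1)) = a * (fun n => a (n + 1)) - 1 := funext h.inner_eq
  rw [this]
  exact (ha.mul ha.shift).sub .one

theorem IsOutwardArm.isLinRec_center {a b : ℕ → F} (h : IsOutwardArm c a b) (ha : IsLinRec a) :
    IsLinRec c := by
  refine .of_shift_iterate 2 ?_
  have : (fun n => c (n + 2)) =
      a * (fun n => a (n + 1)) * (fun n => a (n + 2)) - a - fun n => a (n + 2) :=
    funext h.center_eq
  rw [this]
  exact (((ha.mul ha.shift).mul ha.shift.shift).sub ha).sub ha.shift.shift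

/-- An arm of `Ẽ_6` with arbitrary orientation: `e`, `e'` are the numbers of arrows from the center
to the inner vertex and back, and `f`, `f'` those from the inner to the outer vertex and back. -/
structure IsArm (e e' f f' : ℕ) (c a b : ℕ → F) : Prop where
  inner_arrow : e + e' = 1
  outer_arrow : f + f' = 1
  outer : ∀ n, a (n + 1) * a n = 1 + b (n + 1) ^ f * b n ^ f'
  inner : ∀ n, b (n + 1) * b n = 1 + c (n + 1) ^ e * a (n + 1) ^ f' * (c n ^ e' * a n ^ f)

/-- Every arm becomes outward oriented after shifting its sequences. -/
theorem IsArm.exists_isOutwardArm {e e' f f' : ℕ} {c a b : ℕ → F} (h : IsArm e e' f f' c a b)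
    (ha : ∀ n, a n ≠ 0) (hb : ∀ n, b n ≠ 0) :
    ∃ k l : ℕ, IsOutwardArm c (fun n => a (n + k)) (fun n => b (n + l)) ∧
      ∀ n, b (n + 1) ^ e' * b n ^ e = b (n + l) := by
  obtain ⟨he, hf, h₁, h₂⟩ := h
  have he' : e = 0 ∧ e' = 1 ∨ e = 1 ∧ e' = 0 := by omega
  have hf' : f = 0 ∧ f' = 1 ∨ f = 1 ∧ f' = 0 := by omega
  refine ⟨e' + f', e', ⟨?_, ?_, fun n => ha _, fun n => hb _⟩, ?_⟩ <;>
  rcases he' with ⟨rfl, rfl⟩ | ⟨rfl, rfl⟩ <;> rcases hf' with ⟨rfl, rfl⟩ | ⟨rfl, rfl⟩ <;>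
  intro n <;> simp only [pow_one, pow_zero, mul_one, one_mul, add_zero, zero_add] at h₁ h₂ ⊢
  · exact h₁ (n + 2)
  · exact h₁ (n + 1)
  · exact h₁ (n + 1)
  · exact h₁ n
  · linear_combination h₂ (n + 1)
  · linear_combination h₂ (n + 1)
  · linear_combination h₂ n
  · linear_combination h₂ n

end Arms

/-- Quotients of polynomials taking positive values at the point all of whose coordinates are
one. -/
def IsPosQuotient (x : FractionRing (MvPolynomial (Fin 7) ℚ)) : Prop :=
  ∃ p q : MvPolynomial (Fin 7) ℚ, 0 < MvPolynomial.eval 1 p ∧ 0 < MvPolynomial.eval 1 q ∧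
    x * algebraMap _ _ q = algebraMap _ _ p

namespace IsPosQuotient

variable {x y z : FractionRing (MvPolynomial (Fin 7) ℚ)}

theorem algebraMap_ne_zero {p : MvPolynomial (Fin 7) ℚ} (hp : 0 < MvPolynomial.eval 1 p) :
    algebraMap (MvPolynomial (Fin 7) ℚ) (FractionRing (MvPolynomial (Fin 7) ℚ)) p ≠ 0 := by
  intro h
  rw [FaithfulSMul.algebraMap_eq_zero_iff] at h
  simp [h] at hp

theorem ne_zero (hx : IsPosQuotient x) : x ≠ 0 := by
  obtain ⟨p, q, hp, -, h⟩ := hx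
  rintro rfl
  exact algebraMap_ne_zero hp (by rw [← h, zero_mul])

theorem X (v : Fin 7) : IsPosQuotient (algebraMap (MvPolynomial (Fin 7) ℚ) _ (.X v)) :=
  ⟨.X v, 1, by simp, by simp, by simp⟩

theorem mul (hx : IsPosQuotient x) (hy : IsPosQuotient y) : IsPosQuotient (x * y) := by
  obtain ⟨p, q, hp, hq, h⟩ := hx
  obtain ⟨p', q', hp', hq', h'⟩ := hy
  refine ⟨p * p', q * q', by simpa using mul_pos hp hp', by simpa using mul_pos hq hq', ?_⟩
  rw [map_mul, map_mul, ← h, ← h']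
  ring

theorem one_add (hx : IsPosQuotient x) : IsPosQuotient (1 + x) := by
  obtain ⟨p, q, hp, hq, h⟩ := hx
  refine ⟨q + p, q, by simpa using add_pos hq hp, hq, ?_⟩
  rw [map_add, ← h]
  ring

theorem of_mul (hy : IsPosQuotient y) (hxy : IsPosQuotient (x * y)) : IsPosQuotient x := by
  obtain ⟨p, q, hp, hq, h⟩ := hxy
  obtain ⟨p', q', hp', hq', h'⟩ := hy
  refine ⟨p * q', q * p', by simpa using mul_pos hp hq', by simpa using mul_pos hq hp', ?_⟩
  rw [map_mul, map_mul, ← h, ← h']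
  ring

variable {e e' f f' : ℕ} {c a b : ℕ → FractionRing (MvPolynomial (Fin 7) ℚ)} {n : ℕ}

theorem inner_pow_succ (h : IsArm e e' f f' c a b) (hc : IsPosQuotient (c n))
    (ha : IsPosQuotient (a n)) (hb : IsPosQuotient (b n)) :
    IsPosQuotient (b (n + 1) ^ e' * b n ^ e) := by
  obtain ⟨he, hf, h₁, h₂⟩ := h
  have he' : e = 0 ∧ e' = 1 ∨ e = 1 ∧ e' = 0 := by omega
  have hf' : f = 0 ∧ f' = 1 ∨ f = 1 ∧ f' = 0 := by omega
  specialize h₁ n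
  specialize h₂ n
  rcases he' with ⟨rfl, rfl⟩ | ⟨rfl, rfl⟩ <;> rcases hf' with ⟨rfl, rfl⟩ | ⟨rfl, rfl⟩ <;>
  simp only [pow_one, pow_zero, mul_one, one_mul] at h₁ h₂ ⊢
  · have ha' : IsPosQuotient (a (n + 1)) := ha.of_mul (h₁ ▸ hb.one_add)
    exact hb.of_mul (h₂ ▸ (ha'.mul hc).one_add)
  · exact hb.of_mul (h₂ ▸ (hc.mul ha).one_add)
  · exact hb
  · exact hb

theorem arm_succ (h : IsArm e e' f f' c a b) (hc : IsPosQuotient (c n))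
    (hc' : IsPosQuotient (c (n + 1))) (ha : IsPosQuotient (a n)) (hb : IsPosQuotient (b n)) :
    IsPosQuotient (a (n + 1)) ∧ IsPosQuotient (b (n + 1)) := by
  obtain ⟨he, hf, h₁, h₂⟩ := h
  have he' : e = 0 ∧ e' = 1 ∨ e = 1 ∧ e' = 0 := by omega
  have hf' : f = 0 ∧ f' = 1 ∨ f = 1 ∧ f' = 0 := by omega
  specialize h₁ n
  specialize h₂ n
  have hcc : IsPosQuotient (c (n + 1) ^ e * c n ^ e') := by
    rcases he' with ⟨rfl, rfl⟩ | ⟨rfl, rfl⟩ <;> simpa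
  rw [mul_mul_mul_comm] at h₂
  rcases hf' with ⟨rfl, rfl⟩ | ⟨rfl, rfl⟩ <;>
  simp only [pow_one, pow_zero, mul_one, one_mul] at h₁ h₂
  · have ha' : IsPosQuotient (a (n + 1)) := ha.of_mul (h₁ ▸ hb.one_add)
    exact ⟨ha', hb.of_mul (h₂ ▸ (hcc.mul ha').one_add)⟩
  · have hb' : IsPosQuotient (b (n + 1)) := hb.of_mul (h₂ ▸ (hcc.mul ha).one_add)
    exact ⟨ha.of_mul (h₁ ▸ hb'.one_add), hb'⟩

end IsPosQuotient

theorem IsArm.of_path {F V : Type*} [Field F] [Fintype V] {mult : V → V → ℕ} {X : V → ℕ → F}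
    {u v w : V} (huw : u ≠ w) (hvw : mult v w + mult w v = 1) (huv : mult u v + mult v u = 1)
    (hu : ∀ s, s ≠ v → mult s u = 0 ∧ mult u s = 0)
    (hv : ∀ s, s ≠ u → s ≠ w → mult s v = 0 ∧ mult v s = 0)
    (hX : ∀ v (j : ℕ), X v (j + 1) * X v j =
      1 + (∏ s, X s (j + 1) ^ mult s v) * (∏ d, X d j ^ mult v d)) :
    IsArm (mult w v) (mult v w) (mult v u) (mult u v) (X w) (X u) (X v) := by
  refine ⟨by omega, by omega, fun n => ?_, fun n => ?_⟩
  · rw [hX, Fintype.prod_eq_single v fun s hs => by rw [(hu s hs).1, pow_zero],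
      Fintype.prod_eq_single v fun s hs => by rw [(hu s hs).2, pow_zero]]
  · rw [hX, Fintype.prod_eq_mul w u huw.symm fun s hs => by rw [(hv s hs.2 hs.1).1, pow_zero],
      Fintype.prod_eq_mul w u huw.symm fun s hs => by rw [(hv s hs.2 hs.1).2, pow_zero]]

instance : DecidableRel e6Edge := fun a b => by
  unfold e6Edge
  infer_instance

/-- The frieze relations of an orientation of `Ẽ_6`, arm by arm. -/
theorem isArm_of_frieze {F : Type*} [Field F] (mult : Fin 7 → Fin 7 → ℕ)
    (hedge : ∀ u v : Fin 7, e6Edge u.val v.val → mult u v + mult v u = 1)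
    (hnonedge : ∀ u v : Fin 7, ¬ e6Edge u.val v.val → ¬ e6Edge v.val u.val → mult u v = 0)
    (X : Fin 7 → ℕ → F)
    (hXrec : ∀ v (j : ℕ), X v (j+1) * X v j =
      1 + (∏ s : Fin 7, X s (j+1) ^ mult s v) * (∏ d : Fin 7, X d j ^ mult v d)) :
    IsArm (mult 6 1) (mult 1 6) (mult 1 0) (mult 0 1) (X 6) (X 0) (X 1) ∧
    IsArm (mult 6 3) (mult 3 6) (mult 3 2) (mult 2 3) (X 6) (X 2) (X 3) ∧
    IsArm (mult 6 5) (mult 5 6) (mult 5 4) (mult 4 5) (X 6) (X 4) (X 5) ∧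
    (∀ n, X 6 (n + 1) * X 6 n = 1 + (X 1 (n + 1) ^ mult 1 6 * X 1 n ^ mult 6 1) *
      (X 3 (n + 1) ^ mult 3 6 * X 3 n ^ mult 6 3) *
      (X 5 (n + 1) ^ mult 5 6 * X 5 n ^ mult 6 5)) := by
  refine ⟨.of_path (by decide) (hedge 1 6 ?_) (hedge 0 1 ?_) ?_ ?_ hXrec,
    .of_path (by decide) (hedge 3 6 ?_) (hedge 2 3 ?_) ?_ ?_ hXrec,
    .of_path (by decide) (hedge 5 6 ?_) (hedge 4 5 ?_) ?_ ?_ hXrec, ?_⟩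
  case refine_13 =>
    intro n
    rw [hXrec]
    simp (disch := decide) only [Fin.prod_univ_seven, hnonedge]
    ring
  all_goals first
    | decide
    | exact fun s hs => ⟨hnonedge _ _ (by revert s; decide) (by revert s; decide),
        hnonedge _ _ (by revert s; decide) (by revert s; decide)⟩
    | exact fun s hs hs' => ⟨hnonedge _ _ (by revert s; decide) (by revert s; decide),
        hnonedge _ _ (by revert s; decide) (by revert s; decide)⟩

/-- Let `Q` be any orientation of Ẽ_6, encoded by the arrow multiplicity
function `mult` : for each edge `{u,v}` there is exactly one arrow between `u` and `v`
(in one of the two directions), and there are no other arrows. Then every frieze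
sequence `(X^i_j)_j` in `ℚ(x_1,…,x_7)` satisfies a linear recurrence. -/
theorem stmt_2
    (mult : Fin 7 → Fin 7 → ℕ)   -- number of arrows from `u` to `v`
    (hedge : ∀ u v : Fin 7, e6Edge u.val v.val → mult u v + mult v u = 1)
    (hnonedge : ∀ u v : Fin 7, ¬ e6Edge u.val v.val → ¬ e6Edge v.val u.val → mult u v = 0)
    -- the frieze sequences
    (X : Fin 7 → ℕ → FractionRing (MvPolynomial (Fin 7) ℚ))
    (hX0 : ∀ v, X v 0 = algebraMap (MvPolynomial (Fin 7) ℚ)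
      (FractionRing (MvPolynomial (Fin 7) ℚ)) (MvPolynomial.X v))
    (hXrec : ∀ v (j : ℕ), X v (j+1) * X v j =
      1 + (∏ s : Fin 7, X s (j+1) ^ mult s v) * (∏ d : Fin 7, X d j ^ mult v d)) :
    -- every frieze sequence satisfies a linear recurrence
    ∀ i : Fin 7, ∃ s : ℕ, 1 ≤ s ∧
      ∃ coeff : Fin s → FractionRing (MvPolynomial (Fin 7) ℚ),
        ∀ j : ℕ, X i (j + s) = ∑ t : Fin s, coeff t * X i (j + t.val) := by
  obtain ⟨arm₀, arm₁, arm₂, center⟩ := isArm_of_frieze mult hedge hnonedge X hXrec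
  have pos : ∀ n v, IsPosQuotient (X v n) := by
    intro n
    induction n with
    | zero => exact fun v => hX0 v ▸ .X v
    | succ n ih =>
      have p₆ : IsPosQuotient (X 6 (n + 1)) := (ih 6).of_mul <| center n ▸
        (((IsPosQuotient.inner_pow_succ arm₀ (ih 6) (ih 0) (ih 1)).mul
          (.inner_pow_succ arm₁ (ih 6) (ih 2) (ih 3))).mul
          (.inner_pow_succ arm₂ (ih 6) (ih 4) (ih 5))).one_add
      have p₀ := IsPosQuotient.arm_succ arm₀ (ih 6) p₆ (ih 0) (ih 1)
      have p₁ := IsPosQuotient.arm_succ arm₁ (ih 6) p₆ (ih 2) (ih 3)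
      have p₂ := IsPosQuotient.arm_succ arm₂ (ih 6) p₆ (ih 4) (ih 5)
      intro v
      fin_cases v
      exacts [p₀.1, p₀.2, p₁.1, p₁.2, p₂.1, p₂.2, p₆]
  have hne : ∀ v n, X v n ≠ 0 := fun v n => (pos n v).ne_zero
  obtain ⟨k₀, l₀, out₀, hl₀⟩ := arm₀.exists_isOutwardArm (hne 0) (hne 1)
  obtain ⟨k₁, l₁, out₁, hl₁⟩ := arm₁.exists_isOutwardArm (hne 2) (hne 3)
  obtain ⟨k₂, l₂, out₂, hl₂⟩ := arm₂.exists_isOutwardArm (hne 4) (hne 5)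
  simp only [hl₀, hl₁, hl₂] at center
  have r₀ := out₀.isLinRec_outer out₁ out₂ center (hne 6)
  have r₁ := out₁.isLinRec_outer out₂ out₀ (fun n => by rw [center n]; ring) (hne 6)
  have r₂ := out₂.isLinRec_outer out₀ out₁ (fun n => by rw [center n]; ring) (hne 6)
  intro i
  apply IsLinRec.exists_recurrence
  fin_cases i
  exacts [r₀.of_shift_iterate, (out₀.isLinRec_inner r₀).of_shift_iterate, r₁.of_shift_iterate,
    (out₁.isLinRec_inner r₁).of_shift_iterate, r₂.of_shift_iterate,
    (out₂.isLinRec_inner r₂).of_shift_iterate, out₀.isLinRec_center r₀]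
end

section
/- Let n ≥ 4 be even and let Q be the quiver of type D̃_n with vertex set {0,1,…,n} and arrows n→n−2, (n−1)→n−2, i→i−1 for 3 ≤ i ≤ n−2, 2→1 and 2→0. Then there exists an element Y of ℚ(x_0,…,x_n) such that for every extending vertex i ∈ {0, 1, n−1, n} and every j ≥ 0 one has Y·X^i_{j+n−2} = X^i_j + X^i_{j+2(n−2)}. -/
/-- Arrow multiplicities of the quiver of type D̃_n on vertices `{0,…,n}` with arrows
`n → n−2`, `(n−1) → n−2`, `i → i−1` for `3 ≤ i ≤ n−2`, `2 → 1` and `2 → 0`. -/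
def multDtilde (n : ℕ) (s t : Fin (n+1)) : ℕ :=
  if (s.val = n ∧ t.val = n - 2) ∨ (s.val = n - 1 ∧ t.val = n - 2) ∨
     (3 ≤ s.val ∧ s.val ≤ n - 2 ∧ t.val + 1 = s.val) ∨
     (s.val = 2 ∧ t.val = 1) ∨ (s.val = 2 ∧ t.val = 0) then 1 else 0

section PositiveFractions

variable {σ : Type*}

/-- A rational function that is a quotient of two polynomials taking positive values at the
point all of whose coordinates are `1`. -/
def IsPositiveFraction (x : FractionRing (MvPolynomial σ ℚ)) : Prop :=
  ∃ p q : MvPolynomial σ ℚ, 0 < MvPolynomial.eval 1 p ∧ 0 < MvPolynomial.eval 1 q ∧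
    x * algebraMap (MvPolynomial σ ℚ) (FractionRing (MvPolynomial σ ℚ)) q =
      algebraMap (MvPolynomial σ ℚ) (FractionRing (MvPolynomial σ ℚ)) p

namespace IsPositiveFraction

variable {x y z : FractionRing (MvPolynomial σ ℚ)}

theorem one : IsPositiveFraction (1 : FractionRing (MvPolynomial σ ℚ)) :=
  ⟨1, 1, by simp, by simp, by simp⟩

theorem algebraMap_X (v : σ) :
    IsPositiveFraction (algebraMap (MvPolynomial σ ℚ) (FractionRing (MvPolynomial σ ℚ))
      (MvPolynomial.X v)) :=
  ⟨MvPolynomial.X v, 1, by simp, by simp, by simp⟩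

theorem mul (hx : IsPositiveFraction x) (hy : IsPositiveFraction y) :
    IsPositiveFraction (x * y) := by
  obtain ⟨p, q, hp, hq, h⟩ := hx
  obtain ⟨r, s, hr, hs, h'⟩ := hy
  refine ⟨p * r, q * s, by simpa using mul_pos hp hr, by simpa using mul_pos hq hs, ?_⟩
  rw [map_mul, map_mul, ← h, ← h']
  ring

theorem add (hx : IsPositiveFraction x) (hy : IsPositiveFraction y) :
    IsPositiveFraction (x + y) := by
  obtain ⟨p, q, hp, hq, h⟩ := hx
  obtain ⟨r, s, hr, hs, h'⟩ := hy
  refine ⟨p * s + r * q, q * s, ?_, by simpa using mul_pos hq hs, ?_⟩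
  · simpa using add_pos (mul_pos hp hs) (mul_pos hr hq)
  · rw [map_mul, map_add, map_mul, map_mul, ← h, ← h']
    ring

theorem of_mul_eq (hx : IsPositiveFraction x) (hz : IsPositiveFraction z) (h : y * x = z) :
    IsPositiveFraction y := by
  obtain ⟨p, q, hp, hq, hx⟩ := hx
  obtain ⟨r, s, hr, hs, hz⟩ := hz
  refine ⟨r * q, p * s, by simpa using mul_pos hr hq, by simpa using mul_pos hp hs, ?_⟩
  rw [map_mul, map_mul, ← hx, ← hz, ← h]
  ring

theorem ne_zero (hx : IsPositiveFraction x) : x ≠ 0 := by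
  rintro rfl
  obtain ⟨p, q, hp, -, h⟩ := hx
  rw [zero_mul, eq_comm, map_eq_zero_iff _ (IsFractionRing.injective _ _)] at h
  simp [h] at hp

theorem pow (hx : IsPositiveFraction x) (k : ℕ) : IsPositiveFraction (x ^ k) := by
  induction k with
  | zero => simpa using one
  | succ k ih => simpa [pow_succ] using ih.mul hx

theorem prod {ι : Type*} (s : Finset ι) {f : ι → FractionRing (MvPolynomial σ ℚ)}
    (hf : ∀ i ∈ s, IsPositiveFraction (f i)) : IsPositiveFraction (∏ i ∈ s, f i) :=
  Finset.prod_induction f IsPositiveFraction (fun _ _ => mul) one hf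

end IsPositiveFraction

end PositiveFractions

theorem multDtilde_eq_zero_of_le {n : ℕ} (hn : 4 ≤ n) {s t : Fin (n+1)} (h : s ≤ t) :
    multDtilde n s t = 0 := by
  have : s.val ≤ t.val := h
  unfold multDtilde
  rw [if_neg]
  omega

/-- All terms of the frieze sequences are positive fractions. -/
theorem isPositiveFraction_frieze {n : ℕ} (hn : 4 ≤ n)
    {X : Fin (n+1) → ℕ → FractionRing (MvPolynomial (Fin (n+1)) ℚ)}
    (hX0 : ∀ v, X v 0 = algebraMap (MvPolynomial (Fin (n+1)) ℚ)
      (FractionRing (MvPolynomial (Fin (n+1)) ℚ)) (MvPolynomial.X v))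
    (hXrec : ∀ v (j : ℕ), X v (j+1) * X v j =
      1 + (∏ s : Fin (n+1), X s (j+1) ^ multDtilde n s v) *
          (∏ d : Fin (n+1), X d j ^ multDtilde n v d)) (v : Fin (n+1)) (j : ℕ) :
    IsPositiveFraction (X v j) := by
  induction j generalizing v with
  | zero => exact hX0 v ▸ .algebraMap_X v
  | succ j ihj =>
    induction v using WellFoundedGT.induction with
    | ind v ihv =>
      refine (ihj v).of_mul_eq (.add .one (.mul ?_ ?_)) (hXrec v j)
      · refine .prod _ fun s _ => ?_
        rcases le_or_gt s v with h | h
        · simpa [multDtilde_eq_zero_of_le hn h] using IsPositiveFraction.one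
        · exact (ihv s h).pow _
      · exact .prod _ fun d _ => (ihj d).pow _

section LinearRecurrence

variable {K : Type*} [Field K]

/-- The matrix taking `(f j, f (j + 1))` to `(f (j + k), f (j + k + 1))` whenever
`f i + f (i + 2) = α i * f (i + 1)` for all `i`. -/
def transferMatrix (α : ℕ → K) (j : ℕ) : ℕ → Matrix (Fin 2) (Fin 2) K
  | 0 => 1
  | k + 1 => !![0, 1; -1, α (j + k)] * transferMatrix α j k

theorem det_transferMatrix (α : ℕ → K) (j k : ℕ) : (transferMatrix α j k).det = 1 := by
  induction k with
  | zero => simp [transferMatrix]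
  | succ k ih => rw [transferMatrix, Matrix.det_mul, ih, Matrix.det_fin_two_of]; simp

theorem transferMatrix_succ_left_mul (α : ℕ → K) (j k : ℕ) :
    transferMatrix α (j + 1) k * !![0, 1; -1, α j] = transferMatrix α j (k + 1) := by
  induction k with
  | zero => simp [transferMatrix]
  | succ k ih =>
    rw [transferMatrix, mul_assoc, ih, add_right_comm j 1 k, add_assoc j k 1, ← transferMatrix]

theorem transferMatrix_mulVec {α f : ℕ → K} (hf : ∀ j, f j + f (j + 2) = α j * f (j + 1))
    (j k : ℕ) :
    (transferMatrix α j k).mulVec ![f j, f (j + 1)] = ![f (j + k), f (j + k + 1)] := by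
  induction k with
  | zero => simp [transferMatrix]
  | succ k ih =>
    rw [transferMatrix, ← Matrix.mulVec_mulVec, ih]
    ext i
    fin_cases i
    · simp [Matrix.mulVec, dotProduct, add_assoc]
    · simp [Matrix.mulVec, dotProduct, ← add_assoc, ← hf (j + k)]

theorem transferMatrix_add_period {α : ℕ → K} {m : ℕ} (hα : ∀ j, α (j + m) = α j) (j k : ℕ) :
    transferMatrix α (j + m) k = transferMatrix α j k := by
  induction k with
  | zero => rfl
  | succ k ih => rw [transferMatrix, transferMatrix, ih, add_right_comm, hα]

theorem trace_transferMatrix_period {α : ℕ → K} {m : ℕ} (hα : ∀ j, α (j + m) = α j) (j : ℕ) :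
    (transferMatrix α j m).trace = (transferMatrix α 0 m).trace := by
  induction j with
  | zero => rfl
  | succ j ih =>
    have hinv : !![0, 1; -1, α j] * !![α j, -1; 1, 0] = 1 := by
      ext i k
      fin_cases i <;> fin_cases k <;> simp
    calc (transferMatrix α (j + 1) m).trace
        = (transferMatrix α (j + 1) m * !![0, 1; -1, α j] * !![α j, -1; 1, 0]).trace := by
          rw [mul_assoc, hinv, mul_one]
      _ = (transferMatrix α j m).trace := by
          rw [transferMatrix_succ_left_mul, transferMatrix, hα, Matrix.trace_mul_comm,
            ← mul_assoc, mul_eq_one_comm.mp hinv, one_mul]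
      _ = _ := ih

/-- Solutions of a second order linear recurrence with `m`-periodic coefficients satisfy a linear
recurrence with constant coefficients along steps of length `m`. -/
theorem trace_transferMatrix_mul {α f : ℕ → K} {m : ℕ} (hα : ∀ j, α (j + m) = α j)
    (hf : ∀ j, f j + f (j + 2) = α j * f (j + 1)) (j : ℕ) :
    (transferMatrix α 0 m).trace * f (j + m) = f j + f (j + 2 * m) := by
  rw [← trace_transferMatrix_period hα j]
  have h₁ := transferMatrix_mulVec hf j m
  have h₂ := transferMatrix_mulVec hf (j + m) m
  rw [transferMatrix_add_period hα] at h₂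
  have hdet := det_transferMatrix α j m
  rw [Matrix.det_fin_two] at hdet
  rw [Matrix.trace_fin_two, two_mul, ← add_assoc]
  have h₁0 := congrFun h₁ 0
  have h₁1 := congrFun h₁ 1
  have h₂0 := congrFun h₂ 0
  simp [Matrix.mulVec, dotProduct] at h₁0 h₁1 h₂0
  rw [← h₂0, ← h₁1, ← h₁0]
  linear_combination f j * hdet

/-- The recurrence of `trace_transferMatrix_mul` along even periods, for two sequences that are
coupled by a second order linear recurrence. -/
theorem trace_transferMatrix_mul_of_interleaved {α a b : ℕ → K} {m : ℕ} (hm : Even m)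
    (hα : ∀ j, α (j + m) = α j) (ha : ∀ j, a j + a (j + 2) = α j * b (j + 1))
    (hb : ∀ j, b j + b (j + 2) = α j * a (j + 1)) (j : ℕ) :
    (transferMatrix α 0 m).trace * a (j + m) = a j + a (j + 2 * m) := by
  have h := trace_transferMatrix_mul (f := fun i => if Even (i + j) then a i else b i) hα
    (fun i => by
      by_cases h : Even (i + j)
      · simp [show Even (i + 2 + j) by grind, show ¬ Even (i + 1 + j) by grind, h, ha]
      · simp [show ¬ Even (i + 2 + j) by grind, show Even (i + 1 + j) by grind, h, hb]) j
  simpa [show Even (j + m + j) by grind, show Even (j + 2 * m + j) by grind] using h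

end LinearRecurrence

section Tiling

variable {K : Type*} [Field K] {T : ℕ → ℕ → K} {N : ℕ}

theorem tiling_coeff_row
    (hT : ∀ k < N, ∀ j, T (k+1) (j+1) * T (k+1) j = 1 + T (k+2) (j+1) * T k j)
    (hT0 : ∀ k < N, ∀ j, T (k+1) j ≠ 0) (j k : ℕ) (hk : k < N) :
    (T k j + T (k+2) (j+2)) / T (k+1) (j+1) = (T 0 j + T 2 (j+2)) / T 1 (j+1) := by
  induction k with
  | zero => rfl
  | succ k ih =>
    rw [← ih (by omega), div_eq_div_iff (hT0 _ hk _) (hT0 _ (by omega) _)]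
    linear_combination hT k (by omega) j - hT (k+1) hk (j+1)

theorem tiling_coeff_diagonal
    (hT : ∀ k < N, ∀ j, T (k+1) (j+1) * T (k+1) j = 1 + T (k+2) (j+1) * T k j)
    (hT0 : ∀ k < N, ∀ j, T (k+1) j ≠ 0) (j k : ℕ) (hk : k < N) :
    (T k (j+k) + T (k+2) (j+k)) / T (k+1) (j+k) = (T 0 j + T 2 j) / T 1 j := by
  induction k with
  | zero => rfl
  | succ k ih =>
    rw [← ih (by omega), div_eq_div_iff (hT0 _ hk _) (hT0 _ (by omega) _), ← add_assoc]
    linear_combination hT k (by omega) (j+k) - hT (k+1) hk (j+k)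

end Tiling

theorem exists_trace_of_frieze {K : Type*} [Field K] {m : ℕ} (hm : Even m) (hm2 : 2 ≤ m)
    {T : ℕ → ℕ → K} {a b d e : ℕ → K}
    (ha0 : ∀ j, a j ≠ 0) (hb0 : ∀ j, b j ≠ 0) (hd0 : ∀ j, d j ≠ 0) (he0 : ∀ j, e j ≠ 0)
    (hT0 : ∀ k, 2 ≤ k → k ≤ m → ∀ j, T k j ≠ 0)
    (ha : ∀ j, a (j+1) * a j = 1 + T 2 (j+1)) (hb : ∀ j, b (j+1) * b j = 1 + T 2 (j+1))
    (hd : ∀ j, d (j+1) * d j = 1 + T m j) (he : ∀ j, e (j+1) * e j = 1 + T m j)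
    (hT1 : ∀ j, T 1 j = a j * b j) (hTm : ∀ j, T (m+1) j = d j * e j)
    (hTl : ∀ j, T 0 j = T 2 (j+1) + 2) (hTr : ∀ j, T (m+2) (j+1) = T m j + 2)
    (hT : ∀ k, 1 ≤ k → k < m → ∀ j, T (k+1) (j+1) * T (k+1) j = 1 + T (k+2) (j+1) * T k j) :
    ∃ Y, ∀ j, Y * a (j+m) = a j + a (j+2*m) ∧ Y * b (j+m) = b j + b (j+2*m) ∧
      Y * d (j+m) = d j + d (j+2*m) ∧ Y * e (j+m) = e j + e (j+2*m) := by
  have hT' : ∀ k < m+1, ∀ j, T (k+1) (j+1) * T (k+1) j = 1 + T (k+2) (j+1) * T k j := by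
    intro k hk j
    rcases Nat.eq_zero_or_pos k with rfl | h
    · rw [zero_add, zero_add, hT1, hT1, hTl]
      linear_combination (b (j+1) * b j) * ha j + (1 + T 2 (j+1)) * hb j
    rcases Nat.lt_or_ge k m with h' | h'
    · exact hT k h h' j
    obtain rfl : k = m := by omega
    rw [hTm, hTm, hTr]
    linear_combination (e (j+1) * e j) * hd j + (1 + T k j) * he j
  have hT0' : ∀ k < m+1, ∀ j, T (k+1) j ≠ 0 := by
    intro k hk j
    rcases Nat.eq_zero_or_pos k with rfl | h
    · simpa [hT1] using ⟨ha0 j, hb0 j⟩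
    rcases Nat.lt_or_ge k m with h' | h'
    · exact hT0 _ (by omega) (by omega) j
    obtain rfl : k = m := by omega
    simpa [hTm] using ⟨hd0 j, he0 j⟩
  let α : ℕ → K := fun j => (T 0 j + T 2 (j+2)) / T 1 (j+1)
  have hβ : ∀ j, α j = (T m j + T m (j+1) + 2) / T (m+1) (j+1) := fun j => by
    rw [show α j = _ from (tiling_coeff_row hT' hT0' j m (by omega)).symm, hTr]
    ring
  have hper : ∀ j, α (j+m) = α j := fun j => by
    have h := tiling_coeff_diagonal hT' hT0' (j+1) m (by omega)
    rw [show j + 1 + m = j + m + 1 by omega, hTr] at h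
    rw [hTl (j+1)] at h
    rw [hβ, show α j = (T 0 j + T 2 (j+2)) / T 1 (j+1) from rfl, hTl j]
    linear_combination h
  have hab : ∀ j, α j * (a (j+1) * b (j+1)) = 2 + T 2 (j+1) + T 2 (j+2) := fun j => by
    have := hT0' 0 (by omega) (j+1)
    rw [zero_add, hT1] at this
    rw [show α j = (T 0 j + T 2 (j+2)) / T 1 (j+1) from rfl, hT1, div_mul_cancel₀ _ this, hTl]
    ring
  have hde : ∀ j, α j * (d (j+1) * e (j+1)) = 2 + T m j + T m (j+1) := fun j => by
    rw [hβ, hTm, div_mul_cancel₀ _ (mul_ne_zero (hd0 _) (he0 _))]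
    ring
  have ha' : ∀ j, a j + a (j+2) = α j * b (j+1) := fun j =>
    mul_left_cancel₀ (ha0 (j+1)) (by linear_combination ha j + ha (j+1) - hab j)
  have hb' : ∀ j, b j + b (j+2) = α j * a (j+1) := fun j =>
    mul_left_cancel₀ (hb0 (j+1)) (by linear_combination hb j + hb (j+1) - hab j)
  have hd' : ∀ j, d j + d (j+2) = α j * e (j+1) := fun j =>
    mul_left_cancel₀ (hd0 (j+1)) (by linear_combination hd j + hd (j+1) - hde j)
  have he' : ∀ j, e j + e (j+2) = α j * d (j+1) := fun j =>
    mul_left_cancel₀ (he0 (j+1)) (by linear_combination he j + he (j+1) - hde j)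
  exact ⟨_, fun j => ⟨trace_transferMatrix_mul_of_interleaved hm hper ha' hb' j,
    trace_transferMatrix_mul_of_interleaved hm hper hb' ha' j,
    trace_transferMatrix_mul_of_interleaved hm hper hd' he' j,
    trace_transferMatrix_mul_of_interleaved hm hper he' hd' j⟩⟩

theorem prod_pow_eq_prod_of_indicator {ι M : Type*} [Fintype ι] [DecidableEq ι] [CommMonoid M]
    (f : ι → M) (c : ι → ℕ) (S : Finset ι) (hc : ∀ i, c i = if i ∈ S then 1 else 0) :
    ∏ i, f i ^ c i = ∏ i ∈ S, f i := by
  simp [hc, pow_ite, Finset.prod_ite_mem]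

/-- Let `n ≥ 4` be even and `Q` the above quiver of type D̃_n. Then there is
an element `Y` of `ℚ(x_0,…,x_n)` such that for every extending vertex `i ∈ {0,1,n−1,n}`
and every `j ≥ 0` one has `Y·X^i_{j+n−2} = X^i_j + X^i_{j+2(n−2)}`. -/
theorem stmt_14 (n : ℕ) (hn : 4 ≤ n) (heven : Even n)
    -- the frieze sequences
    (X : Fin (n+1) → ℕ → FractionRing (MvPolynomial (Fin (n+1)) ℚ))
    (hX0 : ∀ v, X v 0 = algebraMap (MvPolynomial (Fin (n+1)) ℚ)
      (FractionRing (MvPolynomial (Fin (n+1)) ℚ)) (MvPolynomial.X v))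
    (hXrec : ∀ v (j : ℕ), X v (j+1) * X v j =
      1 + (∏ s : Fin (n+1), X s (j+1) ^ multDtilde n s v) *
          (∏ d : Fin (n+1), X d j ^ multDtilde n v d)) :
    ∃ Y : FractionRing (MvPolynomial (Fin (n+1)) ℚ),
      ∀ i : Fin (n+1), (i.val = 0 ∨ i.val = 1 ∨ i.val = n - 1 ∨ i.val = n) →
        ∀ j : ℕ, Y * X i (j + (n - 2)) = X i j + X i (j + 2 * (n - 2)) := by
  obtain ⟨m, rfl⟩ : ∃ m, n = m + 2 := ⟨n - 2, by omega⟩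
  have hX : ∀ v j, X v j ≠ 0 := fun v j => (isPositiveFraction_frieze hn hX0 hXrec v j).ne_zero
  have hrec : ∀ (v : Fin (m+2+1)) (S D : Finset (Fin (m+2+1))),
      (∀ s, multDtilde (m+2) s v = if s ∈ S then 1 else 0) →
      (∀ d, multDtilde (m+2) v d = if d ∈ D then 1 else 0) →
      ∀ j, X v (j+1) * X v j = 1 + (∏ s ∈ S, X s (j+1)) * ∏ d ∈ D, X d j := by
    intro v S D hS hD j
    rw [hXrec, prod_pow_eq_prod_of_indicator _ _ S hS, prod_pow_eq_prod_of_indicator _ _ D hD]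
  let V : ℕ → Fin (m+2+1) := Fin.ofNat (m+2+1)
  have hval : ∀ k, k ≤ m+2 → (V k).val = k := fun k hk => Nat.mod_eq_of_lt (by omega)
  have heq : ∀ k, k ≤ m+2 → ∀ s, s = V k ↔ s.val = k := fun k hk s => by
    rw [Fin.ext_iff, hval k hk]
  let T : ℕ → ℕ → FractionRing (MvPolynomial (Fin (m+2+1)) ℚ) := fun k j =>
    if k = 0 then X (V 2) (j+1) + 2 else if k = 1 then X (V 0) j * X (V 1) j else
    if k = m+1 then X (V (m+1)) j * X (V (m+2)) j else
    if k = m+2 then X (V m) (j-1) + 2 else X (V k) j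
  have hT0 : ∀ j, T 0 j = X (V 2) (j+1) + 2 := fun j => rfl
  have hT1 : ∀ j, T 1 j = X (V 0) j * X (V 1) j := fun j => rfl
  have hTm1 : ∀ j, T (m+1) j = X (V (m+1)) j * X (V (m+2)) j := fun j => by
    simp only [T]
    rw [if_neg (by omega), if_neg (by omega), if_pos trivial]
  have hTm2 : ∀ j, T (m+2) j = X (V m) (j-1) + 2 := fun j => by
    simp only [T]
    rw [if_neg (by omega), if_neg (by omega), if_neg (by omega), if_pos trivial]
  have hmid : ∀ k, 2 ≤ k → k ≤ m → ∀ j, T k j = X (V k) j := fun k h₁ h₂ j => by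
    simp only [T]
    rw [if_neg (by omega), if_neg (by omega), if_neg (by omega), if_neg (by omega)]
  have hT2 := hmid 2 le_rfl (by omega)
  have hTm := hmid m (by omega) le_rfl
  have hsink : ∀ k, k = 0 ∨ k = 1 → ∀ j,
      X (V k) (j+1) * X (V k) j = 1 + T 2 (j+1) := fun k hk j => by
    rw [hrec (V k) {V 2} ∅ (fun s => ?_) (fun s => ?_), hT2]
    · simp
    · rw [multDtilde, hval _ (by omega)]
      refine if_congr ?_ rfl rfl
      rw [Finset.mem_singleton, heq _ (by omega)]
      omega
    · rw [multDtilde, hval k (by omega), if_neg (by omega), if_neg (by simp)]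
  have hsource : ∀ k, k = m+1 ∨ k = m+2 → ∀ j,
      X (V k) (j+1) * X (V k) j = 1 + T m j := fun k hk j => by
    rw [hrec (V k) ∅ {V m} (fun s => ?_) (fun s => ?_), hTm]
    · simp
    · rw [multDtilde, hval k (by omega), if_neg (by omega), if_neg (by simp)]
    · rw [multDtilde, hval _ (by omega)]
      refine if_congr ?_ rfl rfl
      rw [Finset.mem_singleton, heq _ (by omega)]
      omega
  have hpath : ∀ k, 1 ≤ k → k < m → ∀ j,
      T (k+1) (j+1) * T (k+1) j = 1 + T (k+2) (j+1) * T k j := fun k h₁ h₂ j => by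
    obtain ⟨S, hS, hS'⟩ : ∃ S : Finset (Fin (m+2+1)),
        (∀ s, multDtilde (m+2) s (V (k+1)) = if s ∈ S then 1 else 0) ∧
        ∏ s ∈ S, X s (j+1) = T (k+2) (j+1) := by
      rcases Nat.lt_or_ge (k+1) m with h | h
      · refine ⟨{V (k+2)}, fun s => ?_, by simp [hmid (k+2) (by omega) (by omega)]⟩
        rw [multDtilde, hval _ (by omega)]
        refine if_congr ?_ rfl rfl
        rw [Finset.mem_singleton, heq _ (by omega)]
        omega
      · obtain rfl : m = k+1 := by omega
        refine ⟨{V (k+1+1), V (k+1+2)}, fun s => ?_, ?_⟩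
        · rw [multDtilde, hval _ (by omega)]
          refine if_congr ?_ rfl rfl
          rw [Finset.mem_insert, Finset.mem_singleton, heq _ (by omega), heq _ (by omega)]
          omega
        · rw [Finset.prod_pair, hTm1]
          rw [Ne, heq _ (by omega), hval _ (by omega)]
          omega
    obtain ⟨D, hD, hD'⟩ : ∃ D : Finset (Fin (m+2+1)),
        (∀ d, multDtilde (m+2) (V (k+1)) d = if d ∈ D then 1 else 0) ∧
        ∏ d ∈ D, X d j = T k j := by
      rcases Nat.lt_or_ge 1 k with h | h
      · refine ⟨{V k}, fun s => ?_, by simp [hmid k (by omega) (by omega)]⟩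
        rw [multDtilde, hval _ (by omega)]
        refine if_congr ?_ rfl rfl
        rw [Finset.mem_singleton, heq _ (by omega)]
        omega
      · obtain rfl : k = 1 := by omega
        refine ⟨{V 0, V 1}, fun s => ?_, ?_⟩
        · rw [multDtilde, hval _ (by omega)]
          refine if_congr ?_ rfl rfl
          rw [Finset.mem_insert, Finset.mem_singleton, heq _ (by omega), heq _ (by omega)]
          omega
        · rw [Finset.prod_pair, hT1]
          rw [Ne, heq _ (by omega), hval _ (by omega)]
          omega
    rw [hmid (k+1) (by omega) (by omega), hmid (k+1) (by omega) (by omega), hrec _ S D hS hD,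
      hS', hD']
  obtain ⟨Y, hY⟩ := exists_trace_of_frieze (m := m) (T := T) (by grind) (by omega)
    (hX (V 0)) (hX (V 1)) (hX (V (m+1))) (hX (V (m+2)))
    (fun k h₁ h₂ j => hmid k h₁ h₂ j ▸ hX _ _)
    (hsink 0 (by simp)) (hsink 1 (by simp)) (hsource (m+1) (by simp)) (hsource (m+2) (by simp))
    hT1 hTm1 (fun j => by rw [hT0, hT2]) (fun j => by rw [hTm2, hTm, Nat.add_sub_cancel]) hpath
  refine ⟨Y, fun i hi j => ?_⟩
  obtain ⟨h0, h1, h2, h3⟩ := hY j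
  rw [Nat.add_sub_cancel]
  rcases hi with h | h | h | h
  · rwa [(heq 0 (by omega) i).mpr h]
  · rwa [(heq 1 (by omega) i).mpr h]
  · rwa [(heq (m+1) (by omega) i).mpr h]
  · rwa [(heq (m+2) (by omega) i).mpr h]
end
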